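/- arXiv:2410.21550 — 3 statements merged into one kernel-verified Lean document; each statement's English description precedes it below -/
import Mathlib

section
/- Let n ≥ 2, τ ∈ (0,1), ε ∈ (0, 1/n), and let H be an n×n real symmetric arrowhead matrix with arrow head α, shaft z = (z_2, …, z_n), and diagonal D = diag(d_2, …, d_n), such that ‖H‖ ≤ 1, d_{i+1} − d_i ≥ τ for all i, and |z_i| ≥ τ for all i. Let λ_1 < … < λ_n be the eigenvalues of H, and let λ̂_1, …, λ̂_n be real numbers satisfying λ̂_1 < d_2 < λ̂_2 < … < d_n < λ̂_n and |λ̂_i − λ_i| ≤ ε τ³/(2(n+1)) for all i. Let α̂ = λ̂_1 + Σ_{j=2}^n (λ̂_j − d_j), and let ẑ_i (signs chosen equal to the signs of z_i) satisfy ẑ_i² = (d_i − λ̂_1)(λ̂_n − d_i) · Π_{j=2}^{i−1} (λ̂_j − d_i)/(d_j − d_i) · Π_{j=i}^{n−1} (λ̂_j − d_i)/(d_{j+1} − d_i). Then |α − α̂| ≤ ε τ³/2, ‖z − ẑ‖₂ ≤ nε/(1 − nε), and the arrowhead matrix Ĥ with arrow head α̂, shaft ẑ, and diagonal D satisfies ‖H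 − Ĥ‖ ≤ ε τ³/2 + nε/(1 − nε). -/
/-!
An arrowhead matrix with simple diagonal and nonvanishing shaft is determined by its eigenvalues
and its diagonal, and the proof compares this reconstruction for `lam` and for `lamh`.

The head is the trace minus the diagonal, so its error is at most the sum of the eigenvalue errors
(`trace_eq`). For the shaft, the secular equation `x - a = ∑ z k ^ 2 / (x - d k)` satisfied by the
eigenvalues (`secular`) gives `∏ (lam k - d i) = -z i ^ 2 ∏_{j ≠ i} (d j - d i)`
(`shaft_identity`), and `zh` is defined by the same formula for `lamh` (`shaft_hat_identity`).
Hence `zh i ^ 2 / z i ^ 2` is the product of the `m + 1` ratios `(lamh k - d i) / (lam k - d i)`.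
The secular equation, the gap condition and the norm bound also yield
`|lam k - d i| ≥ τ ^ 3 / 4` (`dist_lower`), so each ratio is within `ε` of `1`, and the product is
within `exp ((m + 1) ε) - 1 ≤ (m + 1) ε / (1 - (m + 1) ε)` of `1`. The same relative bound then
holds for each `zh i` by equality of signs, and since the shaft has Euclidean norm at most one it
bounds `‖z - zh‖₂`. The matrix bound is the triangle inequality for the head and shaft parts
(`specNorm_arrowhead_sub_le`).
-/

open Matrix

/-- The `(m+1) × (m+1)` real symmetric arrowhead matrix `[[a, zᵀ],[z, diag d]]`
with arrow head `a`, shaft `z` and diagonal `d`. -/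
def arrowhead {m : ℕ} (a : ℝ) (z d : Fin m → ℝ) :
    Matrix (Fin (m + 1)) (Fin (m + 1)) ℝ :=
  Matrix.of (Fin.cons (Fin.cons a z) fun k => Fin.cons (z k) fun l => if k = l then d k else 0)

/-- The spectral norm (largest singular value) of a matrix. -/
noncomputable def specNorm {𝕜 : Type*} [RCLike 𝕜] {p q : Type*} [Fintype p] [Fintype q]
    [DecidableEq q] (A : Matrix p q 𝕜) : ℝ :=
  ‖LinearMap.toContinuousLinearMap (Matrix.toEuclideanLin A)‖

/-! ### Index bookkeeping and elementary facts -/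

/-- A product over `Fin (m + 1)` regrouped around an index `i : Fin m`, in the shape in which the
numerator of `zh i ^ 2` is written: the indices `1, …, i` appear as successors of the `j < i` and
the indices `i + 1, …, m - 1` as the `j > i`. -/
theorem prod_split {m : ℕ} (f : Fin (m + 1) → ℝ) (i : Fin m) :
    ∏ k, f k = f 0 * f (Fin.last m) *
      (∏ j ∈ Finset.univ.filter (fun j => j < i), f (Fin.succ j)) *
      (∏ j ∈ Finset.univ.filter (fun j => i < j), f (Fin.castSucc j)) := by
  induction m with
  | zero => exact i.elim0
  | succ m ih =>
    refine Fin.cases ?_ (fun i => ?_) i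
    · rw [Fin.prod_univ_succ, Fin.prod_univ_castSucc]
      simp only [Finset.prod_filter]
      conv_rhs => rw [Fin.prod_univ_succ]
      rw [Fin.prod_univ_succ (fun j : Fin (m+1) => if (0 : Fin (m+1)) < j then f j.castSucc else 1)]
      simp
      ring
    · rw [Fin.prod_univ_succ, ih (fun k => f k.succ) i]
      simp only [Finset.prod_filter]
      rw [Fin.prod_univ_succ (fun j : Fin (m+1) => if j < i.succ then f j.succ else 1),
        Fin.prod_univ_succ (fun j : Fin (m+1) => if i.succ < j then f j.castSucc else 1)]
      simp
      ring

theorem gap_of_lt {m : ℕ} {τ : ℝ} (hτ : 0 < τ) {d : Fin m → ℝ}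
    (hgap : ∀ i j : Fin m, (j : ℕ) = (i : ℕ) + 1 → τ ≤ d j - d i)
    {i j : Fin m} (hij : i < j) : τ ≤ d j - d i := by
  obtain ⟨k, hk⟩ : ∃ k : ℕ, (j : ℕ) = i + k + 1 :=
    ⟨j - i - 1, by have := Fin.lt_def.mp hij; omega⟩
  clear hij
  induction k generalizing j with
  | zero => exact hgap i j hk
  | succ k ih =>
    have hj := j.isLt
    have h1 := ih (j := ⟨i + k + 1, by omega⟩) rfl
    have h2 := hgap ⟨i + k + 1, by omega⟩ j hk
    linarith

theorem gap_abs {m : ℕ} {τ : ℝ} (hτ : 0 < τ) {d : Fin m → ℝ}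
    (hgap : ∀ i j : Fin m, (j : ℕ) = (i : ℕ) + 1 → τ ≤ d j - d i)
    {i j : Fin m} (hij : i ≠ j) : τ ≤ |d j - d i| := by
  rcases lt_or_gt_of_ne hij with h | h
  · exact (gap_of_lt hτ hgap h).trans (le_abs_self _)
  · rw [abs_sub_comm]
    exact (gap_of_lt hτ hgap h).trans (le_abs_self _)

theorem arrowhead_mulVec_zero {m : ℕ} (a : ℝ) (z d : Fin m → ℝ) (v : Fin (m + 1) → ℝ) :
    (arrowhead a z d *ᵥ v) 0 = a * v 0 + ∑ k, z k * v k.succ := by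
  simp [arrowhead, Matrix.mulVec, dotProduct, Fin.sum_univ_succ]

theorem arrowhead_mulVec_succ {m : ℕ} (a : ℝ) (z d : Fin m → ℝ) (v : Fin (m + 1) → ℝ)
    (k : Fin m) :
    (arrowhead a z d *ᵥ v) k.succ = z k * v 0 + d k * v k.succ := by
  simp [arrowhead, Matrix.mulVec, dotProduct, Fin.sum_univ_succ]

theorem trace_arrowhead {m : ℕ} (a : ℝ) (z d : Fin m → ℝ) :
    (arrowhead a z d).trace = a + ∑ k, d k := by
  simp [arrowhead, Matrix.trace, Fin.sum_univ_succ]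

/-! ### The secular equation -/

theorem exists_eigenvector {n : ℕ} {A : Matrix (Fin n) (Fin n) ℝ} {x : ℝ}
    (hx : x ∈ spectrum ℝ A) : ∃ v : Fin n → ℝ, v ≠ 0 ∧ A *ᵥ v = x • v := by
  rw [← Matrix.spectrum_toLin', ← Module.End.hasEigenvalue_iff_mem_spectrum] at hx
  obtain ⟨v, hv⟩ := hx.exists_hasEigenvector
  exact ⟨v, hv.2, by simpa using hv.apply_eq_smul⟩

/-- The secular equation. An eigenvector cannot vanish at the head: the rows of the shaft would
then leave it a single nonzero coordinate `k`, and the head row would force `z k = 0`. Dividing by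
the head coordinate gives the claim. -/
theorem secular_s4 {m : ℕ} {a : ℝ} {z d : Fin m → ℝ} (hd : Function.Injective d)
    (hz : ∀ k, z k ≠ 0) {x : ℝ} (hx : x ∈ spectrum ℝ (arrowhead a z d)) :
    (∀ k, x - d k ≠ 0) ∧ x - a = ∑ k, z k ^ 2 / (x - d k) := by
  obtain ⟨v, hv, hAv⟩ := exists_eigenvector hx
  have h0 : a * v 0 + ∑ k, z k * v k.succ = x * v 0 := by
    rw [← arrowhead_mulVec_zero a z d, hAv]; simp
  have hs : ∀ k, z k * v 0 = (x - d k) * v k.succ := fun k => by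
    have : z k * v 0 + d k * v k.succ = x * v k.succ := by
      rw [← arrowhead_mulVec_succ a z d, hAv]; simp
    linarith
  have hv0 : v 0 ≠ 0 := by
    intro hv0
    obtain ⟨k, hk⟩ : ∃ k : Fin m, v k.succ ≠ 0 := by
      by_contra! h
      exact hv (funext (Fin.cases hv0 h))
    have hxk : x = d k := by
      have := hs k
      rw [hv0, mul_zero, eq_comm, mul_eq_zero, sub_eq_zero] at this
      exact this.resolve_right hk
    have hsum : ∑ j, z j * v j.succ = z k * v k.succ := by
      refine Finset.sum_eq_single k (fun j _ hj => ?_) (by simp)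
      have := hs j
      rw [hv0, mul_zero, eq_comm, mul_eq_zero, sub_eq_zero, hxk] at this
      rw [this.resolve_left fun h => hj (hd h).symm, mul_zero]
    rw [hsum, hv0] at h0
    exact mul_ne_zero (hz k) hk (by linarith)
  have hne : ∀ k, x - d k ≠ 0 := fun k h => by
    have := hs k
    rw [h, zero_mul] at this
    exact mul_ne_zero (hz k) hv0 this
  refine ⟨hne, mul_right_cancel₀ hv0 ?_⟩
  have : (x - a) * v 0 = ∑ k, z k * v k.succ := by linarith
  rw [this, Finset.sum_mul]
  refine Finset.sum_congr rfl fun k _ => ?_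
  rw [div_mul_eq_mul_div, eq_div_iff (hne k)]
  linear_combination (-z k) * hs k

/-! ### Separation of the eigenvalues from the diagonal -/

theorem sum_sq_mulVec_le {n : ℕ} {A : Matrix (Fin n) (Fin n) ℝ} (hA : specNorm A ≤ 1)
    (v : Fin n → ℝ) : ∑ i, (A *ᵥ v) i ^ 2 ≤ ∑ i, v i ^ 2 := by
  have h := (LinearMap.toContinuousLinearMap (Matrix.toEuclideanLin A)).le_of_opNorm_le hA
    (WithLp.toLp 2 v)
  rw [one_mul, EuclideanSpace.norm_eq, EuclideanSpace.norm_eq] at h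
  have := (Real.sqrt_le_sqrt_iff (by positivity)).mp h
  simpa using this

/-- The first column of a matrix of spectral norm at most one has Euclidean norm at most one. -/
theorem head_shaft_le {m : ℕ} {a : ℝ} {z d : Fin m → ℝ}
    (hA : specNorm (arrowhead a z d) ≤ 1) : a ^ 2 + ∑ k, z k ^ 2 ≤ 1 := by
  have := sum_sq_mulVec_le hA (Pi.single 0 1)
  rw [Fin.sum_univ_succ, Fin.sum_univ_succ, arrowhead_mulVec_zero] at this
  simpa [arrowhead_mulVec_succ] using this

theorem abs_le_one_of_mem {n : ℕ} {A : Matrix (Fin n) (Fin n) ℝ} (hA : specNorm A ≤ 1)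
    {x : ℝ} (hx : x ∈ spectrum ℝ A) : |x| ≤ 1 := by
  obtain ⟨v, hv, hAv⟩ := exists_eigenvector hx
  have h := sum_sq_mulVec_le hA v
  have hpos : 0 < ∑ i, v i ^ 2 := by
    obtain ⟨i, hi⟩ := Function.ne_iff.mp hv
    exact Finset.sum_pos' (fun _ _ => sq_nonneg _) ⟨i, Finset.mem_univ _, by
      have : v i ≠ 0 := hi
      positivity⟩
  rw [hAv] at h
  simp only [Pi.smul_apply, smul_eq_mul, mul_pow, ← Finset.mul_sum] at h
  rw [← sq_le_one_iff_abs_le_one]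
  exact le_of_mul_le_mul_right (by linarith) hpos

/-- Eigenvalues stay at distance at least `τ ^ 3 / 4` from the diagonal entries. If `x` is within
`τ / 2` of `d i`, it is at least `τ / 2` away from every other `d j`, so the secular equation bounds
`z i ^ 2 / |x - d i|` by `2 + 2 / τ`. -/
theorem dist_lower {m : ℕ} {τ a : ℝ} {z d : Fin m → ℝ} (hτ : 0 < τ) (hτ1 : τ < 1)
    (hA : specNorm (arrowhead a z d) ≤ 1)
    (hgap : ∀ i j : Fin m, (j : ℕ) = (i : ℕ) + 1 → τ ≤ d j - d i)
    (hd : Function.Injective d)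
    (hz : ∀ i, τ ≤ |z i|) {x : ℝ} (hx : x ∈ spectrum ℝ (arrowhead a z d)) (i : Fin m) :
    τ ^ 3 / 4 ≤ |x - d i| := by
  have hz0 : ∀ k, z k ≠ 0 := fun k h => by have := hz k; rw [h, abs_zero] at this; linarith
  obtain ⟨hne, hsec⟩ := secular_s4 hd hz0 hx
  have hτ3 : τ ^ 3 ≤ τ ^ 1 := pow_le_pow_of_le_one hτ.le hτ1.le (by norm_num)
  rcases le_or_gt (τ / 2) |x - d i| with h | h
  · linarith
  -- Near `d i`, the other poles of the secular function are at distance at least `τ / 2`.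
  have hfar : ∀ j, j ≠ i → τ / 2 ≤ |x - d j| := fun j hj => by
    have h1 := gap_abs hτ hgap hj
    have h2 : |d i - d j| ≤ |x - d j| + |x - d i| := by
      have := abs_sub (x - d j) (x - d i)
      rwa [show x - d j - (x - d i) = d i - d j by ring] at this
    linarith
  have hhs := head_shaft_le hA
  have hS : 0 ≤ ∑ k, z k ^ 2 := Finset.sum_nonneg fun _ _ => sq_nonneg _
  have ha : |a| ≤ 1 := by
    rw [← sq_le_one_iff_abs_le_one]; linarith
  have hx1 := abs_le_one_of_mem hA hx
  have hrest : |∑ j ∈ Finset.univ.erase i, z j ^ 2 / (x - d j)| ≤ 2 / τ := by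
    calc _ ≤ ∑ j ∈ Finset.univ.erase i, |z j ^ 2 / (x - d j)| := Finset.abs_sum_le_sum_abs _ _
      _ ≤ ∑ j ∈ Finset.univ.erase i, z j ^ 2 * (2 / τ) := by
        refine Finset.sum_le_sum fun j hj => ?_
        have := hfar j (Finset.ne_of_mem_erase hj)
        rw [abs_div, abs_of_nonneg (sq_nonneg (z j)), div_eq_mul_inv]
        refine mul_le_mul_of_nonneg_left ?_ (sq_nonneg _)
        rw [← inv_div]
        exact inv_anti₀ (by positivity) this
      _ ≤ ∑ j, z j ^ 2 * (2 / τ) :=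
        Finset.sum_le_sum_of_subset_of_nonneg (Finset.subset_univ _)
          fun _ _ _ => by positivity
      _ ≤ 1 * (2 / τ) := by
        rw [← Finset.sum_mul]
        refine mul_le_mul_of_nonneg_right ?_ (by positivity)
        nlinarith [sq_nonneg a]
      _ = 2 / τ := one_mul _
  rw [← Finset.add_sum_erase _ _ (Finset.mem_univ i)] at hsec
  have hi : |z i ^ 2 / (x - d i)| ≤ 2 + 2 / τ := by
    rw [show z i ^ 2 / (x - d i) =
      x - a - ∑ j ∈ Finset.univ.erase i, z j ^ 2 / (x - d j) by linarith]
    have h1 := abs_sub (x - a) (∑ j ∈ Finset.univ.erase i, z j ^ 2 / (x - d j))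
    have h2 := abs_sub x a
    linarith
  have hpos : 0 < |x - d i| := abs_pos.mpr (hne i)
  rw [abs_div, abs_of_nonneg (sq_nonneg (z i)), div_le_iff₀ hpos] at hi
  have hzi : τ ^ 2 ≤ z i ^ 2 := by
    rw [← sq_abs (z i)]; exact pow_le_pow_left₀ hτ.le (hz i) 2
  have hmul : τ ^ 3 ≤ (2 * τ + 2) * |x - d i| := by
    have h1 : τ * τ ^ 2 ≤ τ * ((2 + 2 / τ) * |x - d i|) :=
      mul_le_mul_of_nonneg_left (hzi.trans hi) hτ.le
    have h2 : τ * ((2 + 2 / τ) * |x - d i|) = (2 * τ + 2) * |x - d i| := by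
      field_simp
    rw [h2] at h1
    calc τ ^ 3 = τ * τ ^ 2 := by ring
      _ ≤ _ := h1
  nlinarith

/-! ### Trace and shaft in terms of the eigenvalues -/

open Polynomial in
theorem charpoly_eq {n : ℕ} {A : Matrix (Fin n) (Fin n) ℝ} {lam : Fin n → ℝ}
    (hinj : Function.Injective lam) (hspec : spectrum ℝ A = Set.range lam) :
    A.charpoly = ∏ k, (X - C (lam k)) := by
  refine eq_of_degree_sub_lt_of_eval_finset_eq (Finset.univ.image lam) ?_ ?_
  · rw [Finset.card_image_of_injective _ hinj]
    have hdeg : (∏ k, (X - C (lam k))).degree = A.charpoly.degree := by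
      simp [degree_prod, A.charpoly_degree_eq_dim]
    have := degree_sub_lt_left hdeg.symm A.charpoly_monic.ne_zero (by
      rw [A.charpoly_monic.leadingCoeff, (monic_prod_X_sub_C lam _).leadingCoeff])
    simpa [A.charpoly_degree_eq_dim] using this
  · intro x hx
    obtain ⟨k, -, rfl⟩ := Finset.mem_image.mp hx
    have : lam k ∈ spectrum ℝ A := hspec ▸ Set.mem_range_self k
    rw [Matrix.mem_spectrum_iff_isRoot_charpoly] at this
    rw [this.eq_zero, eval_prod, Finset.prod_eq_zero (Finset.mem_univ k) (by simp)]

theorem trace_eq {n : ℕ} {A : Matrix (Fin n) (Fin n) ℝ} {lam : Fin n → ℝ}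
    (hinj : Function.Injective lam) (hspec : spectrum ℝ A = Set.range lam) :
    A.trace = ∑ k, lam k := by
  rw [Matrix.trace_eq_sum_roots_charpoly_of_splits, charpoly_eq hinj hspec]
  · have h := Polynomial.roots_multiset_prod_X_sub_C (Finset.univ.val.map lam)
    rw [Multiset.map_map] at h
    exact congrArg Multiset.sum h
  · rw [charpoly_eq hinj hspec]
    exact Polynomial.Splits.prod fun k _ => Polynomial.Splits.X_sub_C _

open Polynomial in
/-- The shaft is determined by the spectrum. The polynomial
`(X - a) ∏ (X - d j) - ∑ z k ^ 2 ∏_{j ≠ k} (X - d j)` is monic of degree `m + 1` and vanishes at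
every eigenvalue by the secular equation, hence equals `∏ (X - lam k)`; evaluating at `d i` kills
all but one term. -/
theorem shaft_identity {m : ℕ} {a : ℝ} {z d : Fin m → ℝ} (hd : Function.Injective d)
    (hz : ∀ k, z k ≠ 0) {lam : Fin (m + 1) → ℝ} (hinj : Function.Injective lam)
    (hspec : spectrum ℝ (arrowhead a z d) = Set.range lam) (i : Fin m) :
    ∏ k, (lam k - d i) = -(z i ^ 2 * ∏ j ∈ Finset.univ.erase i, (d j - d i)) := by
  -- Both sides change by the same sign when every difference is reversed.
  suffices h : ∏ k, (d i - lam k) = -(z i ^ 2 * ∏ j ∈ Finset.univ.erase i, (d i - d j)) by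
    have hflip : ∏ j ∈ Finset.univ.erase i, (d j - d i) =
        (-1) ^ (m - 1) * ∏ j ∈ Finset.univ.erase i, (d i - d j) := by
      rw [show m - 1 = (Finset.univ.erase i).card by simp, ← Finset.prod_neg]
      simp
    have hflip' : ∏ k, (lam k - d i) = (-1) ^ (m + 1) * ∏ k, (d i - lam k) := by
      have := Finset.prod_neg (s := Finset.univ) (f := fun k => d i - lam k)
      simpa using this
    obtain ⟨p, rfl⟩ : ∃ p, m = p + 1 := ⟨m - 1, by have := i.isLt; omega⟩
    rw [hflip, hflip', h, Nat.add_sub_cancel]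
    ring
  -- `q` has degree less than `m + 1`, so it does not affect the leading term of `P - q`.
  set q : ℝ[X] := ∑ k, C (z k ^ 2) * ∏ j ∈ Finset.univ.erase k, (X - C (d j)) with hq
  set P : ℝ[X] := (X - C a) * ∏ j, (X - C (d j)) with hP
  have hPm : P.Monic := (monic_X_sub_C a).mul (monic_prod_X_sub_C d _)
  have hPd : P.degree = ((m + 1 : ℕ) : WithBot ℕ) := by
    rw [hP, degree_mul, degree_prod]
    simp [add_comm]
  have hqd : q.degree < ((m + 1 : ℕ) : WithBot ℕ) := by
    rw [hq]
    refine (degree_sum_le _ _).trans_lt ((Finset.sup_lt_iff (WithBot.bot_lt_coe _)).mpr ?_)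
    intro k _
    have h1 : (∏ j ∈ Finset.univ.erase k, (X - C (d j))).degree = ((m - 1 : ℕ) : WithBot ℕ) := by
      rw [degree_prod]
      simp
    rw [degree_C_mul (pow_ne_zero 2 (hz k)), h1]
    exact_mod_cast (by omega : m - 1 < m + 1)
  have hLm := monic_prod_X_sub_C lam Finset.univ
  have hLd : (∏ k, (X - C (lam k))).degree = ((m + 1 : ℕ) : WithBot ℕ) := by
    rw [degree_prod]; simp
  have key : P - q = ∏ k, (X - C (lam k)) := by
    refine eq_of_degree_sub_lt_of_eval_finset_eq (Finset.univ.image lam) ?_ ?_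
    · rw [Finset.card_image_of_injective _ hinj, Finset.card_fin,
        show P - q - ∏ k, (X - C (lam k)) = (P - ∏ k, (X - C (lam k))) - q by ring]
      refine (degree_sub_le _ _).trans_lt (max_lt ?_ hqd)
      rw [← hPd]
      exact degree_sub_lt_left (hPd.trans hLd.symm) hPm.ne_zero
        (by rw [hPm.leadingCoeff, hLm.leadingCoeff])
    · intro x hx
      obtain ⟨k, -, rfl⟩ := Finset.mem_image.mp hx
      have hmem : lam k ∈ spectrum ℝ (arrowhead a z d) := hspec ▸ Set.mem_range_self k
      obtain ⟨hne, hsec⟩ := secular_s4 hd hz hmem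
      rw [eval_prod, Finset.prod_eq_zero (Finset.mem_univ k) (by simp)]
      simp only [hP, hq, eval_sub, eval_mul, eval_X, eval_C, eval_prod, eval_finsetSum]
      rw [hsec, Finset.sum_mul, sub_eq_zero]
      refine Finset.sum_congr rfl fun j _ => ?_
      rw [← Finset.mul_prod_erase _ _ (Finset.mem_univ j), ← mul_assoc,
        div_mul_cancel₀ _ (hne j)]
  have := congrArg (eval (d i)) key
  simp only [hP, hq, eval_sub, eval_mul, eval_X, eval_C, eval_prod, eval_finsetSum] at this
  rw [← this, Finset.prod_eq_zero (Finset.mem_univ i) (sub_self _), mul_zero, zero_sub,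
    Finset.sum_eq_single i]
  · intro j _ hj
    rw [Finset.prod_eq_zero (Finset.mem_erase.mpr ⟨hj.symm, Finset.mem_univ i⟩) (sub_self _),
      mul_zero]
  · simp

/-! ### Perturbation bounds -/

/-- The difference of two arrowhead matrices with the same diagonal splits into a head part of norm
`|a - b|` and a pure shaft part, whose norm is the Euclidean norm of the shaft. -/
theorem specNorm_arrowhead_sub_le {m : ℕ} (a b : ℝ) (z w d : Fin m → ℝ) :
    specNorm (arrowhead a z d - arrowhead b w d) ≤
      |a - b| + Real.sqrt (∑ i, (z i - w i) ^ 2) := by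
  set S := Real.sqrt (∑ i, (z i - w i) ^ 2) with hS
  have hS0 : 0 ≤ S := Real.sqrt_nonneg _
  have hSsq : S ^ 2 = ∑ i, (z i - w i) ^ 2 :=
    Real.sq_sqrt (Finset.sum_nonneg fun _ _ => sq_nonneg _)
  refine ContinuousLinearMap.opNorm_le_bound _ (by positivity) fun v => ?_
  have h0 : ((arrowhead a z d - arrowhead b w d) *ᵥ v.ofLp) 0 =
      (a - b) * v 0 + ∑ k, (z k - w k) * v k.succ := by
    rw [Matrix.sub_mulVec, Pi.sub_apply, arrowhead_mulVec_zero, arrowhead_mulVec_zero]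
    simp only [sub_mul, Finset.sum_sub_distrib]
    ring
  have hs : ∀ k : Fin m, ((arrowhead a z d - arrowhead b w d) *ᵥ v.ofLp) k.succ =
      (z k - w k) * v 0 := fun k => by
    rw [Matrix.sub_mulVec, Pi.sub_apply, arrowhead_mulVec_succ, arrowhead_mulVec_succ]
    ring
  set V := Real.sqrt (∑ k : Fin m, v k.succ ^ 2) with hV
  have hV0 : 0 ≤ V := Real.sqrt_nonneg _
  have hVsq : V ^ 2 = ∑ k : Fin m, v k.succ ^ 2 :=
    Real.sq_sqrt (Finset.sum_nonneg fun _ _ => sq_nonneg _)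
  have hcs : |∑ k, (z k - w k) * v k.succ| ≤ S * V := by
    refine abs_le_of_sq_le_sq ?_ (mul_nonneg hS0 hV0)
    rw [mul_pow, hSsq, hVsq]
    exact Finset.sum_mul_sq_le_sq_mul_sq _ _ _
  have hhead : ((a - b) * v 0 + ∑ k, (z k - w k) * v k.succ) ^ 2 ≤
      (|a - b| * |v 0| + S * V) ^ 2 := by
    rw [← sq_abs ((a - b) * v 0 + _)]
    refine pow_le_pow_left₀ (abs_nonneg _) ((abs_add_le _ _).trans ?_) 2
    rw [abs_mul]
    linarith
  have hshaft : ∑ k, ((z k - w k) * v 0) ^ 2 = S ^ 2 * |v 0| ^ 2 := by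
    rw [hSsq, sq_abs, Finset.sum_mul]
    exact Finset.sum_congr rfl fun _ _ => mul_pow _ _ _
  have hv : ‖v‖ ^ 2 = |v 0| ^ 2 + V ^ 2 := by
    rw [EuclideanSpace.norm_sq_eq, Fin.sum_univ_succ, hVsq]
    simp
  refine le_of_sq_le_sq ?_ (by positivity)
  rw [mul_pow, hv, EuclideanSpace.norm_sq_eq, Fin.sum_univ_succ]
  simp only [LinearMap.coe_toContinuousLinearMap', Matrix.toLpLin_apply, Real.norm_eq_abs, sq_abs,
    h0, hs, hshaft]
  have hc := abs_nonneg (a - b)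
  have h1 : 0 ≤ |a - b| * S * (|v 0| ^ 2 + V ^ 2 + (|v 0| - V) ^ 2) := by positivity
  have h2 : 0 ≤ |a - b| ^ 2 * V ^ 2 := by positivity
  have h3 := sq_abs (v 0)
  nlinarith

/-- A product of `n` factors, each perturbed by a relative error at most `ε`, changes by a relative
error at most `exp (n ε) - 1 ≤ n ε / (1 - n ε)`. -/
theorem prod_ratio_sub_one_le {n : ℕ} {ε : ℝ} (hε : n * ε < 1) {x y : Fin n → ℝ}
    (hy : ∀ k, y k ≠ 0) (hxy : ∀ k, |x k - y k| ≤ ε * |y k|) :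
    |∏ k, x k - ∏ k, y k| ≤ n * ε / (1 - n * ε) * |∏ k, y k| := by
  have hprod : ∏ k, x k = (∏ k, (1 + (x k - y k) / y k)) * ∏ k, y k := by
    rw [← Finset.prod_mul_distrib]
    refine Finset.prod_congr rfl fun k _ => ?_
    have := hy k
    field_simp
    ring
  have hsum : ∑ k, ‖(x k - y k) / y k‖ ≤ n * ε := by
    calc _ ≤ ∑ _k : Fin n, ε := Finset.sum_le_sum fun k _ => by
          rw [Real.norm_eq_abs, abs_div, div_le_iff₀ (abs_pos.mpr (hy k))]
          exact hxy k
      _ = n * ε := by simp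
  have hexp : Real.exp (n * ε) - 1 ≤ n * ε / (1 - n * ε) := by
    have h1 : 0 < 1 - n * ε := by linarith
    have h2 := Real.one_sub_le_exp_neg (n * ε)
    rw [Real.exp_neg] at h2
    have h3 := (le_inv_comm₀ h1 (Real.exp_pos _)).mp h2
    calc Real.exp (n * ε) - 1 ≤ (1 - n * ε)⁻¹ - 1 := by linarith
      _ = _ := by field_simp; ring
  rw [hprod, ← sub_one_mul, abs_mul]
  refine mul_le_mul_of_nonneg_right ?_ (abs_nonneg _)
  have h := Finset.norm_prod_one_add_sub_one_le Finset.univ fun k => (x k - y k) / y k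
  rw [Real.norm_eq_abs] at h
  have := Real.exp_le_exp.mpr hsum
  linarith

/-- For numbers of equal sign, a relative error bound for the squares is inherited by the numbers
themselves, since `|x - y| * |x| ≤ |x - y| * |x + y|`. -/
theorem abs_sub_le_of_sq_sub_sq {x y B : ℝ} (hxy : 0 ≤ x * y) (hx : x ≠ 0)
    (h : |y ^ 2 - x ^ 2| ≤ B * x ^ 2) : |x - y| ≤ B * |x| := by
  have hle : |x| ≤ |x + y| := sq_le_sq.mp (by nlinarith [sq_nonneg y])
  have h1 : |x - y| * |x| ≤ B * |x| * |x| := by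
    calc |x - y| * |x| ≤ |x - y| * |x + y| := mul_le_mul_of_nonneg_left hle (abs_nonneg _)
      _ = |y ^ 2 - x ^ 2| := by rw [← abs_mul, abs_sub_comm]; ring_nf
      _ ≤ B * x ^ 2 := h
      _ = B * |x| * |x| := by rw [mul_assoc, abs_mul_abs_self]; ring
  exact le_of_mul_le_mul_right h1 (abs_pos.mpr hx)

/-- The defining formula of `zh i ^ 2`, cleared of denominators: the identity of `shaft_identity`
with `lamh` in place of `lam`. -/
theorem shaft_hat_identity {m : ℕ} {d : Fin m → ℝ} (hd : Function.Injective d)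
    {x : ℝ} {lamh : Fin (m + 1) → ℝ} (i : Fin m)
    (hx : x = (d i - lamh 0) * (lamh (Fin.last m) - d i) *
        (∏ j ∈ Finset.univ.filter (fun j => j < i),
          (lamh (Fin.succ j) - d i) / (d j - d i)) *
        (∏ j ∈ Finset.univ.filter (fun j => i < j),
          (lamh (Fin.castSucc j) - d i) / (d j - d i))) :
    ∏ k, (lamh k - d i) = -(x * ∏ j ∈ Finset.univ.erase i, (d j - d i)) := by
  have herase : ∏ j ∈ Finset.univ.erase i, (d j - d i) =
      (∏ j ∈ Finset.univ.filter (fun j => j < i), (d j - d i)) *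
      ∏ j ∈ Finset.univ.filter (fun j => i < j), (d j - d i) := by
    rw [← Finset.prod_union]
    · refine Finset.prod_congr ?_ fun _ _ => rfl
      ext j
      simp [← lt_or_lt_iff_ne]
    · refine Finset.disjoint_filter.mpr fun j _ h => h.asymm
  have h1 : ∏ j ∈ Finset.univ.filter (fun j => j < i), (d j - d i) ≠ 0 :=
    Finset.prod_ne_zero_iff.mpr fun j hj =>
      sub_ne_zero.mpr (hd.ne (Finset.mem_filter.mp hj).2.ne)
  have h2 : ∏ j ∈ Finset.univ.filter (fun j => i < j), (d j - d i) ≠ 0 :=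
    Finset.prod_ne_zero_iff.mpr fun j hj =>
      sub_ne_zero.mpr (hd.ne (Finset.mem_filter.mp hj).2.ne')
  rw [prod_split (fun k => lamh k - d i) i, hx, herase, Finset.prod_div_distrib,
    Finset.prod_div_distrib]
  field_simp
  ring

/-! ### Error of the reconstructed matrix -/

theorem stmt_4 {m : ℕ} (hm : 1 ≤ m) (τ ε : ℝ)
    (hτ : τ ∈ Set.Ioo (0 : ℝ) 1) (hε : ε ∈ Set.Ioo (0 : ℝ) (1 / (m + 1)))
    (a : ℝ) (z d : Fin m → ℝ)
    (hnorm : specNorm (arrowhead a z d) ≤ 1)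
    (hgap : ∀ i j : Fin m, (j : ℕ) = (i : ℕ) + 1 → τ ≤ d j - d i)
    (hz : ∀ i, τ ≤ |z i|)
    (lam : Fin (m + 1) → ℝ) (hmono : StrictMono lam)
    (hspec : spectrum ℝ (arrowhead a z d) = Set.range lam)
    (lamh : Fin (m + 1) → ℝ)
    (hinter : ∀ k : Fin m, lamh (Fin.castSucc k) < d k ∧ d k < lamh (Fin.succ k))
    (hclose : ∀ i, |lamh i - lam i| ≤ ε * τ ^ 3 / (2 * (m + 2)))
    (zh : Fin m → ℝ)
    (hsign : ∀ i, 0 ≤ z i * zh i)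
    (hzh : ∀ i : Fin m, zh i ^ 2 =
      (d i - lamh 0) * (lamh (Fin.last m) - d i) *
        (∏ j ∈ Finset.univ.filter (fun j => j < i),
          (lamh (Fin.succ j) - d i) / (d j - d i)) *
        (∏ j ∈ Finset.univ.filter (fun j => i < j),
          (lamh (Fin.castSucc j) - d i) / (d j - d i))) :
    |a - (lamh 0 + ∑ j : Fin m, (lamh (Fin.succ j) - d j))| ≤ ε * τ ^ 3 / 2 ∧
    Real.sqrt (∑ i, (z i - zh i) ^ 2) ≤ (m + 1) * ε / (1 - (m + 1) * ε) ∧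
    specNorm (arrowhead a z d -
        arrowhead (lamh 0 + ∑ j : Fin m, (lamh (Fin.succ j) - d j)) zh d)
      ≤ ε * τ ^ 3 / 2 + (m + 1) * ε / (1 - (m + 1) * ε) := by
  obtain ⟨hτ0, hτ1⟩ := hτ
  obtain ⟨hε0, hε1⟩ := hε
  have hd : Function.Injective d := fun i j hij => by
    by_contra hne
    have := gap_abs hτ0 hgap hne
    rw [hij, sub_self, abs_zero] at this
    linarith
  have hz0 : ∀ i, z i ≠ 0 := fun i h => by
    have := hz i
    rw [h, abs_zero] at this
    linarith
  have hm0 : (1 : ℝ) ≤ m := by exact_mod_cast hm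
  have hετ : 0 < ε * τ ^ 3 := by positivity
  have hnε : (m + 1) * ε < 1 := by
    rw [lt_div_iff₀ (by positivity)] at hε1
    linarith
  set B := (m + 1) * ε / (1 - (m + 1) * ε) with hB
  have hB0 : 0 ≤ B := div_nonneg (by positivity) (by linarith)
  have hhead : |a - (lamh 0 + ∑ j : Fin m, (lamh (Fin.succ j) - d j))| ≤ ε * τ ^ 3 / 2 := by
    have htr : a + ∑ k, d k = ∑ k, lam k := by
      rw [← trace_arrowhead a z d, trace_eq hmono.injective hspec]
    have heq : a - (lamh 0 + ∑ j : Fin m, (lamh (Fin.succ j) - d j)) =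
        -∑ k, (lamh k - lam k) := by
      rw [Finset.sum_sub_distrib, Finset.sum_sub_distrib, ← htr, Fin.sum_univ_succ lamh]
      ring
    rw [heq, abs_neg]
    calc _ ≤ ∑ k, |lamh k - lam k| := Finset.abs_sum_le_sum_abs _ _
      _ ≤ ∑ _k : Fin (m + 1), ε * τ ^ 3 / (2 * (m + 2)) := Finset.sum_le_sum fun k _ => hclose k
      _ = (m + 1) * (ε * τ ^ 3 / (2 * (m + 2))) := by simp
      _ ≤ ε * τ ^ 3 / 2 := by
        rw [← mul_div_assoc, div_le_div_iff₀ (by positivity) (by positivity)]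
        nlinarith
  -- `zh i ^ 2 / z i ^ 2 = ∏ (lamh k - d i) / (lam k - d i)`, and every factor is within `ε` of `1`.
  have hcomp : ∀ i, |z i - zh i| ≤ B * |z i| := fun i => by
    refine abs_sub_le_of_sq_sub_sq (hsign i) (hz0 i) ?_
    have hlow : ∀ k, τ ^ 3 / 4 ≤ |lam k - d i| := fun k =>
      dist_lower hτ0 hτ1 hnorm hgap hd hz (hspec ▸ Set.mem_range_self k) i
    have hprod := prod_ratio_sub_one_le (n := m + 1) (ε := ε) (by exact_mod_cast hnε)
      (x := fun k => lamh k - d i) (y := fun k => lam k - d i)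
      (fun k h => by
        have := hlow k
        rw [h, abs_zero] at this
        have : 0 < τ ^ 3 := by positivity
        linarith)
      (fun k => by
        rw [sub_sub_sub_cancel_right]
        -- `2 * (m + 2) ≥ 4`, so the eigenvalue error is at most `ε` times the separation.
        have h1 : ε * τ ^ 3 / (2 * (m + 2)) ≤ ε * τ ^ 3 / 4 :=
          div_le_div_of_nonneg_left hετ.le (by norm_num) (by linarith)
        have h2 := mul_le_mul_of_nonneg_left (hlow k) hε0.le
        have h3 := hclose k
        linarith)
    rw [shaft_identity hd hz0 hmono.injective hspec i,
      shaft_hat_identity hd i (hzh i), neg_sub_neg, ← sub_mul, abs_mul, abs_neg, abs_mul,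
      abs_of_nonneg (sq_nonneg (z i)), ← mul_assoc, abs_sub_comm] at hprod
    push_cast at hprod
    refine le_of_mul_le_mul_right hprod (abs_pos.mpr (Finset.prod_ne_zero_iff.mpr fun j hj => ?_))
    exact sub_ne_zero.mpr (hd.ne (Finset.ne_of_mem_erase hj))
  have hshaft : Real.sqrt (∑ i, (z i - zh i) ^ 2) ≤ B := by
    refine Real.sqrt_le_iff.mpr ⟨hB0, ?_⟩
    calc ∑ i, (z i - zh i) ^ 2 ≤ ∑ i, B ^ 2 * z i ^ 2 := Finset.sum_le_sum fun i _ => by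
          rw [← sq_abs (z i - zh i), ← sq_abs (z i), ← mul_pow]
          exact pow_le_pow_left₀ (abs_nonneg _) (hcomp i) 2
      _ = B ^ 2 * ∑ i, z i ^ 2 := by rw [Finset.mul_sum]
      _ ≤ B ^ 2 * 1 := mul_le_mul_of_nonneg_left
          (by have := head_shaft_le hnorm; nlinarith [sq_nonneg a]) (sq_nonneg _)
      _ = B ^ 2 := mul_one _
  exact ⟨hhead, hshaft, (specNorm_arrowhead_sub_le _ _ _ _ _).trans (add_le_add hhead hshaft)⟩
end

section
/- Let n ≥ 2, α ∈ ℝ, d_2 < d_3 < … < d_n reals, z_2, …, z_n reals, and define f(λ) = λ − α + Σ_{j=2}^n z_j²/(d_j − λ). If λ and λ̂ are two real numbers both lying in the same open interval determined by consecutive poles, i.e. both in (d_i, d_{i+1}) for some i ∈ {2, …, n−1}, or both in (−∞, d_2), or both in (d_n, +∞), then f(λ̂) − f(λ) = (λ̂ − λ) · (1 + Σ_{j=2}^n z_j² / ((d_j − λ̂)(d_j − λ))), the factor in parentheses is ≥ 1, and consequently |λ̂ − λ| ≤ |f(λ̂) − f(λ)|. -/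
/-!
On an interval free of poles `d k - lamh` and `d k - lam` have the same sign for each `k`, so the
product
`(d k - lamh) * (d k - lam)` is positive. Subtracting the secular functions termwise with
`1 / (d - y) - 1 / (d - x) = (y - x) / ((d - y) * (d - x))` then exhibits the difference as
`lamh - lam` times a factor that is `1` plus a sum of nonnegative terms; taking absolute values
gives the last bound.
-/

/-- The secular function `f(x) = x - a + ∑ⱼ zⱼ² / (dⱼ - x)` associated with the data
`(a; z; d)`; its roots are the eigenvalues of the corresponding symmetric arrowhead matrix. -/
noncomputable def secular {q : ℕ} (a : ℝ) (z d : Fin q → ℝ) (x : ℝ) : ℝ :=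
  x - a + ∑ k, z k ^ 2 / (d k - x)

theorem stmt_5 {p : ℕ} (a : ℝ) (z d : Fin (p + 1) → ℝ) (hd : StrictMono d)
    (lam lamh : ℝ)
    (hsame :
      (lam < d 0 ∧ lamh < d 0) ∨
      (d (Fin.last p) < lam ∧ d (Fin.last p) < lamh) ∨
      (∃ i j : Fin (p + 1), (j : ℕ) = (i : ℕ) + 1 ∧
        d i < lam ∧ lam < d j ∧ d i < lamh ∧ lamh < d j)) :
    secular a z d lamh - secular a z d lam =
      (lamh - lam) * (1 + ∑ k, z k ^ 2 / ((d k - lamh) * (d k - lam))) ∧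
    1 ≤ 1 + ∑ k, z k ^ 2 / ((d k - lamh) * (d k - lam)) ∧
    |lamh - lam| ≤ |secular a z d lamh - secular a z d lam| := by
  have hpos : ∀ k, 0 < (d k - lamh) * (d k - lam) := by
    intro k
    rcases hsame with ⟨h1, h2⟩ | ⟨h1, h2⟩ | ⟨i, j, hij, h1, h2, h3, h4⟩
    · have := hd.monotone (Fin.zero_le k)
      exact mul_pos (by linarith) (by linarith)
    · have := hd.monotone (Fin.le_last k)
      exact mul_pos_of_neg_of_neg (by linarith) (by linarith)
    · rcases le_or_gt k i with hk | hk
      · have := hd.monotone hk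
        exact mul_pos_of_neg_of_neg (by linarith) (by linarith)
      · have hjk : j ≤ k := by
          rw [Fin.le_def]
          rw [Fin.lt_def] at hk
          omega
        have := hd.monotone hjk
        exact mul_pos (by linarith) (by linarith)
  have heq : secular a z d lamh - secular a z d lam =
      (lamh - lam) * (1 + ∑ k, z k ^ 2 / ((d k - lamh) * (d k - lam))) := by
    have hsum : ∑ k, z k ^ 2 / (d k - lamh) - ∑ k, z k ^ 2 / (d k - lam) =
        (lamh - lam) * ∑ k, z k ^ 2 / ((d k - lamh) * (d k - lam)) := by
      rw [← Finset.sum_sub_distrib, Finset.mul_sum]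
      refine Finset.sum_congr rfl fun k _ => ?_
      have h1 : d k - lamh ≠ 0 := left_ne_zero_of_mul (hpos k).ne'
      have h2 : d k - lam ≠ 0 := right_ne_zero_of_mul (hpos k).ne'
      field_simp
      ring
    unfold secular
    linear_combination hsum
  have hone : 1 ≤ 1 + ∑ k, z k ^ 2 / ((d k - lamh) * (d k - lam)) :=
    le_add_of_nonneg_right
      (Finset.sum_nonneg fun k _ => div_nonneg (sq_nonneg _) (hpos k).le)
  refine ⟨heq, hone, ?_⟩
  rw [heq, abs_mul]
  exact le_mul_of_one_le_right (abs_nonneg _) (hone.trans (le_abs_self _))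
end

section
/- Let A, T̃ ∈ ℂ^{n×n} be Hermitian, let Q ∈ ℂ^{n×n} be unitary, let E ∈ ℂ^{n×n} with ‖E‖ ≤ δ, and set Q̃ = Q + E. If ‖A − Q̃ T̃ Q̃*‖ ≤ η, then for every i = 1, …, n the eigenvalues (listed in nondecreasing order) satisfy |λ_i(T̃) − λ_i(A)| ≤ η + (2δ + δ²) ‖T̃‖. -/
/-!
The matrix `Q * T * Qᴴ` is Hermitian with the characteristic polynomial of `T`, hence with the same
ordered eigenvalues. Expanding `(Q + E) * T * (Q + E)ᴴ` and using `‖Q‖ ≤ 1`, it differs from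
`(Q + E) * T * (Q + E)ᴴ` by at most `(2 * δ + δ ^ 2) * ‖T‖`, so the claim follows from Weyl's
perturbation inequality `|λ_i(B) - λ_i(A)| ≤ ‖B - A‖` for Hermitian matrices.

For Weyl's inequality, let `u` and `v` be eigenbases of `A` and `B` ordered by eigenvalue. The
`n - 1` conditions `x ⊥ u k` (`k < i`) and `x ⊥ v k` (`k > i`) have a common nonzero solution `x`,
and the spectral expansion of the two quadratic forms at `x` gives
`λ_i(A) ‖x‖² ≤ ⟪x, A x⟫ ≤ ⟪x, B x⟫ + ‖A - B‖ ‖x‖² ≤ (λ_i(B) + ‖A - B‖) ‖x‖²`.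
-/

open Matrix

/-- The eigenvalues of a Hermitian matrix, listed in nondecreasing order. -/
noncomputable def sortedEigs {n : ℕ} {A : Matrix (Fin n) (Fin n) ℂ}
    (hA : A.IsHermitian) : Fin n → ℝ :=
  fun i => hA.eigenvalues (Tuple.sort hA.eigenvalues i)

open scoped Matrix.Norms.L2Operator in
/-- The spectral norm is Mathlib's scoped L2 operator norm, so its C*-algebra API applies. -/
lemma specNorm_eq_norm {n : ℕ} (A : Matrix (Fin n) (Fin n) ℂ) : specNorm A = ‖A‖ := rfl

open scoped Matrix.Norms.L2Operator in
lemma specNorm_sub_comm {n : ℕ} (A B : Matrix (Fin n) (Fin n) ℂ) :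
    specNorm (A - B) = specNorm (B - A) :=
  norm_sub_rev A B

open scoped Matrix.Norms.L2Operator in
lemma specNorm_sub_le {n : ℕ} (A B C : Matrix (Fin n) (Fin n) ℂ) :
    specNorm (A - C) ≤ specNorm (A - B) + specNorm (B - C) :=
  norm_sub_le_norm_sub_add_norm_sub A B C

/-- An orthonormal eigenbasis, numbered so that the eigenvalues are nondecreasing. -/
noncomputable def sortedBasis {n : ℕ} {A : Matrix (Fin n) (Fin n) ℂ} (hA : A.IsHermitian) :
    OrthonormalBasis (Fin n) ℂ (EuclideanSpace ℂ (Fin n)) :=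
  hA.eigenvectorBasis.reindex (Tuple.sort hA.eigenvalues).symm

lemma sortedEigs_monotone {n : ℕ} {A : Matrix (Fin n) (Fin n) ℂ} (hA : A.IsHermitian) :
    Monotone (sortedEigs hA) :=
  Tuple.monotone_sort hA.eigenvalues

lemma toEuclideanLin_sortedBasis {n : ℕ} {A : Matrix (Fin n) (Fin n) ℂ} (hA : A.IsHermitian)
    (j : Fin n) :
    toEuclideanLin A (sortedBasis hA j) = (sortedEigs hA j : ℂ) • sortedBasis hA j := by
  have h := hA.mulVec_eigenvectorBasis (Tuple.sort hA.eigenvalues j)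
  ext k
  simpa [sortedBasis, sortedEigs, toLpLin_apply] using congrFun h k

/-- Spectral expansion of the quadratic form of a Hermitian matrix. -/
lemma re_inner_eq_sum {n : ℕ} {A : Matrix (Fin n) (Fin n) ℂ} (hA : A.IsHermitian)
    (x : EuclideanSpace ℂ (Fin n)) :
    (inner ℂ x (toEuclideanLin A x)).re
      = ∑ j, sortedEigs hA j * ‖inner ℂ (sortedBasis hA j) x‖ ^ 2 := by
  rw [← (sortedBasis hA).sum_inner_mul_inner, Complex.re_sum]
  refine Finset.sum_congr rfl fun j _ => ?_
  have hs := isSymmetric_toEuclideanLin_iff.2 hA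
  rw [← hs, toEuclideanLin_sortedBasis, inner_smul_left, ← inner_conj_symm x,
    mul_left_comm, RCLike.conj_mul]
  rw [Complex.conj_ofReal, Complex.re_ofReal_mul]
  norm_cast

/-- One half of Weyl's perturbation inequality. -/
lemma sortedEigs_le_add {n : ℕ} {A B : Matrix (Fin n) (Fin n) ℂ} (hA : A.IsHermitian)
    (hB : B.IsHermitian) (i : Fin n) :
    sortedEigs hA i ≤ sortedEigs hB i + specNorm (A - B) := by
  set u := sortedBasis hA
  set v := sortedBasis hB
  let L : EuclideanSpace ℂ (Fin n) →ₗ[ℂ] ({k : Fin n // k ≠ i} → ℂ) :=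
    LinearMap.pi fun k =>
      if k.1 < i then (innerSL ℂ (u k.1)).toLinearMap else (innerSL ℂ (v k.1)).toLinearMap
  have hker : LinearMap.ker L ≠ ⊥ := by
    apply LinearMap.ker_ne_bot_of_finrank_lt
    have := i.pos
    simp [Fintype.card_subtype_compl]
    omega
  obtain ⟨x, hx, hx0⟩ := (Submodule.ne_bot_iff _).1 hker
  have hL : ∀ k (hk : k ≠ i), L x ⟨k, hk⟩ = 0 := fun k hk => by
    rw [LinearMap.mem_ker.1 hx]; rfl
  have hu : ∀ k, k < i → inner ℂ (u k) x = 0 := fun k hk => by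
    simpa [L, hk] using hL k hk.ne
  have hv : ∀ k, i < k → inner ℂ (v k) x = 0 := fun k hk => by
    simpa [L, hk.not_gt] using hL k hk.ne'
  have hlow : sortedEigs hA i * ‖x‖ ^ 2 ≤ (inner ℂ x (toEuclideanLin A x)).re := by
    rw [re_inner_eq_sum hA, ← u.sum_sq_norm_inner_right x, Finset.mul_sum]
    refine Finset.sum_le_sum fun k _ => ?_
    rcases lt_or_ge k i with hk | hk
    · simp [u, hu k hk]
    · exact mul_le_mul_of_nonneg_right (sortedEigs_monotone hA hk) (by positivity)
  have hupp : (inner ℂ x (toEuclideanLin B x)).re ≤ sortedEigs hB i * ‖x‖ ^ 2 := by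
    rw [re_inner_eq_sum hB, ← v.sum_sq_norm_inner_right x, Finset.mul_sum]
    refine Finset.sum_le_sum fun k _ => ?_
    rcases lt_or_ge i k with hk | hk
    · simp [v, hv k hk]
    · exact mul_le_mul_of_nonneg_right (sortedEigs_monotone hB hk) (by positivity)
  have hdiff : (inner ℂ x (toEuclideanLin A x)).re - (inner ℂ x (toEuclideanLin B x)).re
      ≤ specNorm (A - B) * ‖x‖ ^ 2 := by
    have h1 : ‖toEuclideanLin (A - B) x‖ ≤ specNorm (A - B) * ‖x‖ :=
      (LinearMap.toContinuousLinearMap (toEuclideanLin (A - B))).le_opNorm x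
    rw [← Complex.sub_re, ← inner_sub_right, ← LinearMap.sub_apply, ← map_sub]
    calc _ ≤ ‖x‖ * ‖toEuclideanLin (A - B) x‖ :=
          (Complex.re_le_norm _).trans (norm_inner_le_norm _ _)
      _ ≤ ‖x‖ * (specNorm (A - B) * ‖x‖) := by gcongr
      _ = _ := by ring
  have hpos : 0 < ‖x‖ ^ 2 := by positivity
  refine le_of_mul_le_mul_right ?_ hpos
  linarith

/-- Weyl's perturbation inequality. -/
lemma abs_sortedEigs_sub_le {n : ℕ} {A B : Matrix (Fin n) (Fin n) ℂ} (hA : A.IsHermitian)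
    (hB : B.IsHermitian) (i : Fin n) :
    |sortedEigs hB i - sortedEigs hA i| ≤ specNorm (A - B) := by
  have h1 := sortedEigs_le_add hA hB i
  have h2 := sortedEigs_le_add hB hA i
  rw [specNorm_sub_comm] at h2
  rw [abs_le]
  constructor <;> linarith

lemma sortedEigs_conj {n : ℕ} {T Q : Matrix (Fin n) (Fin n) ℂ} (hT : T.IsHermitian)
    (hQ : Qᴴ * Q = 1) (hB : (Q * T * Qᴴ).IsHermitian) : sortedEigs hB = sortedEigs hT := by
  have h : hB.eigenvalues = hT.eigenvalues := by
    rw [Matrix.IsHermitian.eigenvalues_eq_eigenvalues_iff, Matrix.charpoly_mul_comm,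
      ← Matrix.mul_assoc, hQ, Matrix.one_mul]
  unfold sortedEigs
  rw [h]

open scoped Matrix.Norms.L2Operator in
lemma specNorm_perturbation {n : ℕ} {δ : ℝ} {T E Q : Matrix (Fin n) (Fin n) ℂ}
    (hQ : Qᴴ * Q = 1) (hE : specNorm E ≤ δ) :
    specNorm ((Q + E) * T * (Q + E)ᴴ - Q * T * Qᴴ) ≤ (2 * δ + δ ^ 2) * specNorm T := by
  simp only [specNorm_eq_norm] at *
  have hδ : 0 ≤ δ := (norm_nonneg _).trans hE
  -- Only `‖Q‖ ≤ 1` is available in general: for `n = 0` the norm of `Q` is `0`.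
  have hQ1 : ‖Q‖ ≤ 1 := by
    rcases subsingleton_or_nontrivial (Matrix (Fin n) (Fin n) ℂ) with h | h
    · rw [Subsingleton.elim Q 0, norm_zero]; exact zero_le_one
    · have h2 : ‖Q‖ * ‖Q‖ = 1 := by
        rw [← Matrix.l2_opNorm_conjTranspose_mul_self, hQ, norm_one]
      nlinarith [norm_nonneg Q]
  have hEs : ‖Eᴴ‖ ≤ δ := by rwa [Matrix.l2_opNorm_conjTranspose]
  have hQs : ‖Qᴴ‖ ≤ 1 := by rwa [Matrix.l2_opNorm_conjTranspose]
  have key : (Q + E) * T * (Q + E)ᴴ - Q * T * Qᴴ = Q * T * Eᴴ + E * T * Qᴴ + E * T * Eᴴ := by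
    rw [Matrix.conjTranspose_add]; noncomm_ring
  have h3 : ∀ {X Y : Matrix (Fin n) (Fin n) ℂ} {a b : ℝ}, ‖X‖ ≤ a → ‖Y‖ ≤ b → 0 ≤ a →
      ‖X * T * Y‖ ≤ a * ‖T‖ * b := fun hX hY ha =>
    (norm_mul_le _ _).trans (mul_le_mul ((norm_mul_le _ _).trans
      (mul_le_mul_of_nonneg_right hX (norm_nonneg _))) hY (norm_nonneg _) (by positivity))
  rw [key]
  refine norm_add₃_le.trans ?_
  have e1 := h3 hQ1 hEs zero_le_one
  have e2 := h3 hE hQs hδ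
  have e3 := h3 hE hEs hδ
  linarith

theorem stmt_12 {n : ℕ} (δ η : ℝ)
    (A T E : Matrix (Fin n) (Fin n) ℂ) (hA : A.IsHermitian) (hT : T.IsHermitian)
    (Q : Matrix (Fin n) (Fin n) ℂ) (hQ : Qᴴ * Q = 1)
    (hE : specNorm E ≤ δ)
    (happrox : specNorm (A - (Q + E) * T * (Q + E)ᴴ) ≤ η) :
    ∀ i : Fin n, |sortedEigs hT i - sortedEigs hA i| ≤ η + (2 * δ + δ ^ 2) * specNorm T := by
  intro i
  have hB : (Q * T * Qᴴ).IsHermitian := Matrix.isHermitian_mul_mul_conjTranspose Q hT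
  rw [← sortedEigs_conj hT hQ hB]
  refine (abs_sortedEigs_sub_le hA hB i).trans ?_
  have htri := specNorm_sub_le A ((Q + E) * T * (Q + E)ᴴ) (Q * T * Qᴴ)
  have hpert := specNorm_perturbation (T := T) hQ hE
  linarith
end
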